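/- arXiv:1904.08561 — 3 statements merged into one kernel-verified Lean document; each statement's English description precedes it below -/
import Mathlib

section
/- Let n ≥ 0 and r ≥ 1 be integers and set m = n + r − 1. Let h : ℤ × ℤ → ℝ satisfy h(p,q) = 0 whenever p < 0, p > n, q < 0, or q > n, and let b : ℤ → ℝ. Define S(k) = ∑_{p=0}^{n} h(p, k − p) and Δ(k) = S(k) + S(2n − k) − 2·b(k). Define h̃(p,q) = ∑_{i=0}^{r-1} h(p − i, q − i), b̃(k) = ∑_{i=0}^{r-1} b(k − 2i), S̃(k) = ∑_{p=0}^{m} h̃(p, k − p), and Δ̃(k) = S̃(k) + S̃(2m − k) − 2·b̃(k). Then for every k ∈ ℤ, Δ̃(k) = ∑_{i=0}^{r-1} Δ(k − 2i). -/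
theorem projective_bundle_nonKahlerness_formula
    (n r : ℕ) (hr : 1 ≤ r) (m : ℕ) (hm : m = n + r - 1)
    (h : ℤ × ℤ → ℝ)
    (hvan : ∀ p q : ℤ, (p < 0 ∨ p > (n : ℤ) ∨ q < 0 ∨ q > (n : ℤ)) → h (p, q) = 0)
    (b : ℤ → ℝ)
    (S : ℤ → ℝ) (hS : ∀ k : ℤ, S k = ∑ p ∈ Finset.range (n + 1), h ((p : ℤ), k - (p : ℤ)))
    (Δ : ℤ → ℝ) (hΔ : ∀ k : ℤ, Δ k = S k + S (2 * (n : ℤ) - k) - 2 * b k)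
    (ht : ℤ × ℤ → ℝ)
    (hht : ∀ p q : ℤ, ht (p, q) = ∑ i ∈ Finset.range r, h (p - (i : ℤ), q - (i : ℤ)))
    (bt : ℤ → ℝ) (hbt : ∀ k : ℤ, bt k = ∑ i ∈ Finset.range r, b (k - 2 * (i : ℤ)))
    (St : ℤ → ℝ) (hSt : ∀ k : ℤ, St k = ∑ p ∈ Finset.range (m + 1), ht ((p : ℤ), k - (p : ℤ)))
    (Δt : ℤ → ℝ) (hΔt : ∀ k : ℤ, Δt k = St k + St (2 * (m : ℤ) - k) - 2 * bt k) :
    ∀ k : ℤ, Δt k = ∑ i ∈ Finset.range r, Δ (k - 2 * (i : ℤ)) := by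
  have key : ∀ k : ℤ, St k = ∑ i ∈ Finset.range r, S (k - 2 * (i : ℤ)) := by
    intro k
    rw [hSt]
    simp only [hht]
    rw [Finset.sum_comm]
    refine Finset.sum_congr rfl fun i hi => ?_
    rw [Finset.mem_range] at hi
    obtain ⟨j, hj⟩ : ∃ j, m + 1 = i + (n + 1) + j := ⟨r - 1 - i, by omega⟩
    rw [hj, Finset.sum_range_add, Finset.sum_range_add, hS]
    rw [Finset.sum_eq_zero (s := Finset.range i), Finset.sum_eq_zero (s := Finset.range j),
      zero_add, add_zero]
    · refine Finset.sum_congr rfl fun p _ => ?_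
      congr 2 <;> push_cast <;> ring
    · intro x _
      apply hvan
      push_cast
      omega
    · intro x hx
      rw [Finset.mem_range] at hx
      apply hvan
      omega
  intro k
  rw [hΔt, key, key, hbt]
  simp only [hΔ]
  rw [Finset.sum_sub_distrib, Finset.sum_add_distrib, Finset.mul_sum]
  congr 2
  rw [← Finset.sum_range_reflect]
  refine Finset.sum_congr rfl fun i hi => ?_
  rw [Finset.mem_range] at hi
  congr 1
  omega
end

section
/- Let n ≥ 0 and r ≥ 1 be integers and set m = n + r − 1. Let h : ℤ × ℤ → ℝ satisfy h(p,q) = 0 whenever p < 0, p > n, q < 0, or q > n, and let b : ℤ → ℝ. Define S(k) = ∑_{p=0}^{n} h(p, k − p) and Δ(k) = S(k) + S(2n − k) − 2·b(k), and assume Δ(k) ≥ 0 for all k ∈ ℤ. Define h̃(p,q) = ∑_{i=0}^{r-1} h(p − i, q − i), b̃(k) = ∑_{i=0}^{r-1} b(k − 2i), S̃(k) = ∑_{p=0}^{m} h̃(p, k − p), and Δ̃(k) = S̃(k) + S̃(2m − k) − 2·b̃(k). Then Δ̃(k) = 0 for all k ∈ ℤ if and only if Δ(k) = 0 for all k ∈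 ℤ. -/
theorem projective_bundle_lemma_numerical
    (n r : ℕ) (hr : 1 ≤ r) (m : ℕ) (hm : m = n + r - 1)
    (h : ℤ × ℤ → ℝ)
    (hvan : ∀ p q : ℤ, (p < 0 ∨ p > (n : ℤ) ∨ q < 0 ∨ q > (n : ℤ)) → h (p, q) = 0)
    (b : ℤ → ℝ)
    (S : ℤ → ℝ) (hS : ∀ k : ℤ, S k = ∑ p ∈ Finset.range (n + 1), h ((p : ℤ), k - (p : ℤ)))
    (Δ : ℤ → ℝ) (hΔ : ∀ k : ℤ, Δ k = S k + S (2 * (n : ℤ) - k) - 2 * b k)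
    (hΔnonneg : ∀ k : ℤ, 0 ≤ Δ k)
    (ht : ℤ × ℤ → ℝ)
    (hht : ∀ p q : ℤ, ht (p, q) = ∑ i ∈ Finset.range r, h (p - (i : ℤ), q - (i : ℤ)))
    (bt : ℤ → ℝ) (hbt : ∀ k : ℤ, bt k = ∑ i ∈ Finset.range r, b (k - 2 * (i : ℤ)))
    (St : ℤ → ℝ) (hSt : ∀ k : ℤ, St k = ∑ p ∈ Finset.range (m + 1), ht ((p : ℤ), k - (p : ℤ)))
    (Δt : ℤ → ℝ) (hΔt : ∀ k : ℤ, Δt k = St k + St (2 * (m : ℤ) - k) - 2 * bt k) :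
    (∀ k : ℤ, Δt k = 0) ↔ (∀ k : ℤ, Δ k = 0) := by
  have key : ∀ (k : ℤ) (i : ℕ), i < r →
      ∑ p ∈ Finset.range (m + 1), h ((p : ℤ) - (i : ℤ), k - (p : ℤ) - (i : ℤ))
        = S (k - 2 * (i : ℤ)) := by
    intro k i hi
    obtain ⟨j, hj⟩ : ∃ j, r = i + 1 + j := ⟨r - (i + 1), by omega⟩
    have e : m + 1 = i + (n + 1) + j := by omega
    rw [e, Finset.sum_range_add, Finset.sum_range_add, hS]
    have h1 : ∑ p ∈ Finset.range i, h ((p : ℤ) - (i : ℤ), k - (p : ℤ) - (i : ℤ)) = 0 := by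
      apply Finset.sum_eq_zero
      intro p hp
      rw [Finset.mem_range] at hp
      apply hvan
      left
      omega
    have h2 : ∑ x ∈ Finset.range j, h (((i + (n + 1) + x : ℕ) : ℤ) - (i : ℤ),
        k - ((i + (n + 1) + x : ℕ) : ℤ) - (i : ℤ)) = 0 := by
      apply Finset.sum_eq_zero
      intro p hp
      apply hvan
      right; left
      push_cast
      omega
    rw [h1, h2, zero_add, add_zero]
    apply Finset.sum_congr rfl
    intro p _
    congr 2
    · push_cast; ring
    · push_cast; ring
  have hSt2 : ∀ k : ℤ, St k = ∑ i ∈ Finset.range r, S (k - 2 * (i : ℤ)) := by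
    intro k
    rw [hSt]
    simp only [hht]
    rw [Finset.sum_comm]
    apply Finset.sum_congr rfl
    intro i hi
    exact key k i (Finset.mem_range.mp hi)
  have hrefl : ∀ k : ℤ, St (2 * (m : ℤ) - k)
      = ∑ i ∈ Finset.range r, S (2 * (n : ℤ) - (k - 2 * (i : ℤ))) := by
    intro k
    rw [hSt2, ← Finset.sum_range_reflect]
    apply Finset.sum_congr rfl
    intro i hi
    rw [Finset.mem_range] at hi
    congr 1
    omega
  have hmain : ∀ k : ℤ, Δt k = ∑ i ∈ Finset.range r, Δ (k - 2 * (i : ℤ)) := by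
    intro k
    rw [hΔt, hrefl, hSt2, hbt]
    simp only [hΔ, Finset.sum_sub_distrib, Finset.sum_add_distrib, Finset.mul_sum]
  constructor
  · intro H k
    have h0 := H k
    rw [hmain, Finset.sum_eq_zero_iff_of_nonneg (fun i _ => hΔnonneg _)] at h0
    simpa using h0 0 (Finset.mem_range.mpr (by omega))
  · intro H k
    rw [hmain]
    exact Finset.sum_eq_zero (fun i _ => H _)
end

section
/- Let n ≥ r ≥ 2 be integers and set m = n − r. Let hX : ℤ × ℤ → ℝ satisfy hX(p,q) = 0 whenever p < 0, p > n, q < 0, or q > n, let hY : ℤ × ℤ → ℝ satisfy hY(p,q) = 0 whenever p < 0, p > m, q < 0, or q > m, and let bX, bY : ℤ → ℝ. Define SX(k) = ∑_{p=0}^{n} hX(p, k − p), ΔX(k) = SX(k) + SX(2n − k) − 2·bX(k), SY(k) = ∑_{p=0}^{m} hY(p, k − p), and ΔY(k) = SY(k) + SY(2m − k) − 2·bY(k), and assume ΔX(k) ≥ 0 and ΔY(k) ≥ 0 for all k ∈ ℤ. Define h̃(p,q) = hX(p,q) + ∑_{i=1}^{r-1} hY(p − i, q − i), b̃(k) = bX(k)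 + ∑_{i=1}^{r-1} bY(k − 2i), S̃(k) = ∑_{p=0}^{n} h̃(p, k − p), and Δ̃(k) = S̃(k) + S̃(2n − k) − 2·b̃(k). Then Δ̃(k) = 0 for all k ∈ ℤ if and only if ΔX(k) = 0 for all k ∈ ℤ and ΔY(k) = 0 for all k ∈ ℤ. -/
theorem blow_up_lemma_numerical
    (n r : ℕ) (hr : 2 ≤ r) (hrn : r ≤ n) (m : ℕ) (hm : m = n - r)
    (hX : ℤ × ℤ → ℝ)
    (hXvan : ∀ p q : ℤ, (p < 0 ∨ p > (n : ℤ) ∨ q < 0 ∨ q > (n : ℤ)) → hX (p, q) = 0)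
    (hY : ℤ × ℤ → ℝ)
    (hYvan : ∀ p q : ℤ, (p < 0 ∨ p > (m : ℤ) ∨ q < 0 ∨ q > (m : ℤ)) → hY (p, q) = 0)
    (bX bY : ℤ → ℝ)
    (SX : ℤ → ℝ) (hSX : ∀ k : ℤ, SX k = ∑ p ∈ Finset.range (n + 1), hX ((p : ℤ), k - (p : ℤ)))
    (ΔX : ℤ → ℝ) (hΔX : ∀ k : ℤ, ΔX k = SX k + SX (2 * (n : ℤ) - k) - 2 * bX k)
    (SY : ℤ → ℝ) (hSY : ∀ k : ℤ, SY k = ∑ p ∈ Finset.range (m + 1), hY ((p : ℤ), k - (p : ℤ)))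
    (ΔY : ℤ → ℝ) (hΔY : ∀ k : ℤ, ΔY k = SY k + SY (2 * (m : ℤ) - k) - 2 * bY k)
    (hΔXnonneg : ∀ k : ℤ, 0 ≤ ΔX k) (hΔYnonneg : ∀ k : ℤ, 0 ≤ ΔY k)
    (ht : ℤ × ℤ → ℝ)
    (hht : ∀ p q : ℤ,
      ht (p, q) = hX (p, q) + ∑ i ∈ Finset.Icc 1 (r - 1), hY (p - (i : ℤ), q - (i : ℤ)))
    (bt : ℤ → ℝ)
    (hbt : ∀ k : ℤ, bt k = bX k + ∑ i ∈ Finset.Icc 1 (r - 1), bY (k - 2 * (i : ℤ)))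
    (St : ℤ → ℝ) (hSt : ∀ k : ℤ, St k = ∑ p ∈ Finset.range (n + 1), ht ((p : ℤ), k - (p : ℤ)))
    (Δt : ℤ → ℝ) (hΔt : ∀ k : ℤ, Δt k = St k + St (2 * (n : ℤ) - k) - 2 * bt k) :
    (∀ k : ℤ, Δt k = 0) ↔ ((∀ k : ℤ, ΔX k = 0) ∧ (∀ k : ℤ, ΔY k = 0)) := by
  have inner : ∀ (k : ℤ) (i : ℕ), i ∈ Finset.Icc 1 (r - 1) →
      ∑ p ∈ Finset.range (n + 1), hY ((p : ℤ) - (i : ℤ), k - (p : ℤ) - (i : ℤ))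
        = SY (k - 2 * (i : ℤ)) := by
    intro k i hi
    rw [Finset.mem_Icc] at hi
    rw [hSY]
    symm
    apply Finset.sum_of_injOn (fun p : ℕ => p + i)
    · intro a _ b _ h
      simpa using h
    · intro a ha
      simp only [Finset.coe_range, Set.mem_Iio] at ha ⊢
      omega
    · intro p hp hp'
      apply hYvan
      by_contra hc
      apply hp'
      refine ⟨p - i, ?_, ?_⟩
      · simp only [Finset.coe_range, Set.mem_Iio]
        omega
      · show p - i + i = p
        omega
    · intro p _
      congr 2
      · push_cast; ring
      · push_cast; ring
  have hS : ∀ k : ℤ, St k = SX k + ∑ i ∈ Finset.Icc 1 (r - 1), SY (k - 2 * (i : ℤ)) := by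
    intro k
    rw [hSt, hSX, ← Finset.sum_congr rfl (inner k), Finset.sum_comm, ← Finset.sum_add_distrib]
    exact Finset.sum_congr rfl fun p _ => hht _ _
  have hrefl : ∀ k : ℤ, ∑ i ∈ Finset.Icc 1 (r - 1), SY (2 * (n : ℤ) - k - 2 * (i : ℤ))
      = ∑ i ∈ Finset.Icc 1 (r - 1), SY (2 * (m : ℤ) - (k - 2 * (i : ℤ))) := by
    intro k
    apply Finset.sum_nbij' (fun i : ℕ => r - i) (fun i : ℕ => r - i)
    · intro i hi
      simp only [Finset.mem_Icc] at hi ⊢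
      omega
    · intro i hi
      simp only [Finset.mem_Icc] at hi ⊢
      omega
    · intro i hi
      simp only [Finset.mem_Icc] at hi ⊢
      omega
    · intro i hi
      simp only [Finset.mem_Icc] at hi ⊢
      omega
    · intro i hi
      simp only [Finset.mem_Icc] at hi
      congr 1
      omega
  have key : ∀ k : ℤ, Δt k = ΔX k + ∑ i ∈ Finset.Icc 1 (r - 1), ΔY (k - 2 * (i : ℤ)) := by
    intro k
    simp only [hΔY, Finset.sum_sub_distrib, Finset.sum_add_distrib, ← Finset.mul_sum]
    rw [hΔt, hΔX, hS, hS, hbt, hrefl]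
    ring
  constructor
  · intro h
    have hnn : ∀ k : ℤ, 0 ≤ ∑ i ∈ Finset.Icc 1 (r - 1), ΔY (k - 2 * (i : ℤ)) :=
      fun k => Finset.sum_nonneg fun i _ => hΔYnonneg _
    refine ⟨fun k => ?_, fun k => ?_⟩
    · linarith [h k, key k, hnn k, hΔXnonneg k]
    · have h0 : ∑ i ∈ Finset.Icc 1 (r - 1), ΔY (k + 2 - 2 * (i : ℤ)) = 0 := by
        linarith [h (k + 2), key (k + 2), hnn (k + 2), hΔXnonneg (k + 2)]
      have h1 := (Finset.sum_eq_zero_iff_of_nonneg fun i _ => hΔYnonneg _).1 h0 1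
        (Finset.mem_Icc.2 ⟨le_refl _, by omega⟩)
      simpa using h1
  · rintro ⟨h1, h2⟩ k
    rw [key, h1]
    simp [h2]
end
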